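/- Let q > 1 be real, λ a real number, and φ ≤ k natural numbers. For j ∈ ℕ and real ρ define f_{j,ρ}(X,Y) = Σ_{u=0}^{j} [j;u] γ(ρ,u) Y^u X^{j−u} and g_j(X,Y) = Σ_{u=0}^{j} (−1)^u q^{u(u−1)} [j;u] Y^u X^{j−u}. Then for every X ∈ ℝ and every Y ≠ 0, the φ-fold skew-q^{-1}-derivative with respect to Y satisfies (f_{k,λ}(X,·))^{{φ}}(Y) = q^{−2σ_φ} β(k,φ) γ(λ,φ) · f_{k−φ, λ−2φ}(X,Y) and (g_k(X,·))^{{φ}}(Y) = (−1)^φ β(k,φ) · g_{k−φ}(X,Y). -/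

import Mathlib

/-- The skew-q-nary Gaussian coefficient `[x;k]` for real `x`. -/
noncomputable def gaussQ (q x : ℝ) (k : ℕ) : ℝ :=
  ∏ i ∈ Finset.range k, (q ^ (2 * x) - q ^ (2 * (i : ℝ))) / (q ^ (2 * (k : ℝ)) - q ^ (2 * (i : ℝ)))

/-- The skew-q-nary Gamma function `γ(x,k)`. -/
noncomputable def skewGamma (q x : ℝ) (k : ℕ) : ℝ :=
  ∏ i ∈ Finset.range k, (q ^ x - q ^ (2 * (i : ℝ)))

/-- The skew-q-nary Beta function `β(x,k)`. -/
noncomputable def betaQ (q x : ℝ) (k : ℕ) : ℝ :=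
  ∏ i ∈ Finset.range k, (q ^ (2 * (x - (i : ℝ))) - 1) / (q ^ 2 - 1)

/-- The skew-q⁻¹-derivative operator. -/
noncomputable def qInvDeriv (q : ℝ) (h : ℝ → ℝ) : ℝ → ℝ :=
  fun Y => (h ((q ^ 2)⁻¹ * Y) - h Y) / (((q ^ 2)⁻¹ - 1) * Y)

theorem gaussQ_natCast (q : ℝ) (n u : ℕ) :
    gaussQ q (n : ℝ) u =
      ∏ i ∈ Finset.range u, ((q ^ 2) ^ n - (q ^ 2) ^ i) / ((q ^ 2) ^ u - (q ^ 2) ^ i) := by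
  have rpow_two_mul (m : ℕ) : q ^ (2 * (m : ℝ)) = (q ^ 2) ^ m := by
    rw [← pow_mul, ← Real.rpow_natCast]
    push_cast
    rfl
  simp only [gaussQ, rpow_two_mul]

/-- The absorption identity for Gaussian coefficients. -/
theorem gaussQ_succ_succ {q : ℝ} (hq : 1 < q) (n u : ℕ) :
    gaussQ q ((n + 1 : ℕ) : ℝ) (u + 1) * ((q ^ 2) ^ (u + 1) - 1) =
      ((q ^ 2) ^ (n + 1) - 1) * gaussQ q (n : ℝ) u := by
  have hQ : 1 < q ^ 2 := one_lt_pow₀ hq two_ne_zero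
  have hne : (q ^ 2) ^ (u + 1) - 1 ≠ 0 := (sub_pos.2 (one_lt_pow₀ hQ u.succ_ne_zero)).ne'
  have hfactor (i : ℕ) :
      ((q ^ 2) ^ (n + 1) - (q ^ 2) ^ (i + 1)) / ((q ^ 2) ^ (u + 1) - (q ^ 2) ^ (i + 1)) =
        ((q ^ 2) ^ n - (q ^ 2) ^ i) / ((q ^ 2) ^ u - (q ^ 2) ^ i) := by
    simp only [pow_succ _ n, pow_succ _ u, pow_succ _ i, ← sub_mul]
    exact mul_div_mul_right _ _ (by positivity)
  rw [gaussQ_natCast, gaussQ_natCast, Finset.prod_range_succ']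
  simp only [hfactor, pow_zero]
  field_simp

theorem rpow_eq_pow_mul_rpow_sub {q : ℝ} (hq : 1 < q) (x : ℝ) (n : ℕ) :
    q ^ x = (q ^ 2) ^ n * q ^ (x - 2 * (n : ℝ)) := by
  rw [← pow_mul, ← Real.rpow_natCast, ← Real.rpow_add (by linarith)]
  congr 1
  push_cast
  ring

theorem skewGamma_succ' {q : ℝ} (hq : 1 < q) (x : ℝ) (u : ℕ) :
    skewGamma q x (u + 1) = (q ^ x - 1) * (q ^ 2) ^ u * skewGamma q (x - 2) u := by
  have hfactor (i : ℕ) : q ^ x - q ^ (2 * ((i + 1 : ℕ) : ℝ)) =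
      q ^ 2 * (q ^ (x - 2) - q ^ (2 * (i : ℝ))) := by
    rw [rpow_eq_pow_mul_rpow_sub hq x 1, rpow_eq_pow_mul_rpow_sub hq (2 * ((i + 1 : ℕ) : ℝ)) 1,
      pow_one, ← mul_sub]
    congr 4 <;> push_cast <;> ring
  simp only [skewGamma, Finset.prod_range_succ', hfactor, Finset.prod_mul_distrib,
    Finset.prod_const, Finset.card_range, Nat.cast_zero, mul_zero, Real.rpow_zero]
  ring

theorem skewGamma_succ {q : ℝ} (hq : 1 < q) (x : ℝ) (n : ℕ) :
    skewGamma q x (n + 1) = skewGamma q x n * ((q ^ 2) ^ n * (q ^ (x - 2 * (n : ℝ)) - 1)) := by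
  rw [skewGamma, Finset.prod_range_succ, ← skewGamma, rpow_eq_pow_mul_rpow_sub hq x n,
    rpow_eq_pow_mul_rpow_sub hq (2 * (n : ℝ)) n, sub_self, Real.rpow_zero]
  ring

theorem betaQ_succ {q : ℝ} (hq : 1 < q) (m n : ℕ) :
    betaQ q ((m + n : ℕ) : ℝ) (n + 1) =
      betaQ q ((m + n : ℕ) : ℝ) n * (((q ^ 2) ^ m - 1) / (q ^ 2 - 1)) := by
  rw [betaQ, Finset.prod_range_succ, ← betaQ,
    rpow_eq_pow_mul_rpow_sub hq (2 * (((m + n : ℕ) : ℝ) - n)) m]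
  push_cast
  simp

/-- The skew-q⁻¹-derivative away from zero only sees values away from zero, and is homogeneous. -/
theorem qInvDeriv_eq_const_mul {q : ℝ} (hq : 1 < q) {h g : ℝ → ℝ} {c : ℝ}
    (hg : ∀ Z, Z ≠ 0 → h Z = c * g Z) {Y : ℝ} (hY : Y ≠ 0) :
    qInvDeriv q h Y = c * qInvDeriv q g Y := by
  simp only [qInvDeriv]
  rw [hg Y hY, hg _ (mul_ne_zero (by positivity) hY), ← mul_sub, mul_div_assoc]

/-- Termwise skew-q⁻¹-differentiation of a homogeneous polynomial. -/
theorem qInvDeriv_sum {q : ℝ} (hq : 1 < q) (n : ℕ) (a b : ℕ → ℝ) (c X : ℝ)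
    (hab : ∀ u, a (u + 1) * (((q ^ 2) ^ (u + 1) - 1) / (q ^ 2 - 1)) = c * (q ^ 2) ^ u * b u)
    {Y : ℝ} (hY : Y ≠ 0) :
    qInvDeriv q (fun Z => ∑ u ∈ Finset.range (n + 1 + 1), a u * Z ^ u * X ^ (n + 1 - u)) Y =
      c * ∑ u ∈ Finset.range (n + 1), b u * Y ^ u * X ^ (n - u) := by
  have hQ : 1 < q ^ 2 := one_lt_pow₀ hq two_ne_zero
  have hne : q ^ 2 - 1 ≠ 0 := (sub_pos.2 hQ).ne'
  have hinv : (q ^ 2)⁻¹ - 1 ≠ 0 := (sub_neg.2 (inv_lt_one_of_one_lt₀ hQ)).ne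
  simp only [qInvDeriv]
  rw [div_eq_iff (mul_ne_zero hinv hY), ← Finset.sum_sub_distrib, Finset.sum_range_succ',
    Finset.mul_sum, Finset.sum_mul]
  simp only [pow_zero, sub_self, add_zero, Nat.add_sub_add_right]
  refine Finset.sum_congr rfl fun u _ => ?_
  have hu := hab u
  generalize q ^ 2 = Q at *
  have hQ0 : Q ≠ 0 := by positivity
  have hb : c * b u = a (u + 1) * ((Q ^ (u + 1) - 1) / (Q - 1)) / Q ^ u := by
    rw [hu]
    field_simp
  rw [← mul_assoc c, ← mul_assoc c, hb, mul_pow, inv_pow]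
  field_simp
  ring

theorem qInvDeriv_iterate_skewGamma {q : ℝ} (hq : 1 < q) (lam : ℝ) (φ m : ℕ) (X : ℝ) {Y : ℝ}
    (hY : Y ≠ 0) :
    ((qInvDeriv q)^[φ] (fun Z => ∑ u ∈ Finset.range (m + φ + 1),
          gaussQ q ((m + φ : ℕ) : ℝ) u * skewGamma q lam u * Z ^ u * X ^ (m + φ - u))) Y =
      q ^ (-((φ : ℝ) * ((φ : ℝ) - 1))) * betaQ q ((m + φ : ℕ) : ℝ) φ * skewGamma q lam φ *
        ∑ u ∈ Finset.range (m + 1),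
          gaussQ q (m : ℝ) u * skewGamma q (lam - 2 * (φ : ℝ)) u * Y ^ u * X ^ (m - u) := by
  induction φ generalizing m Y with
  | zero => simp [betaQ, skewGamma]
  | succ φ ih =>
    rw [show m + (φ + 1) = m + 1 + φ by ring, Function.iterate_succ_apply',
      qInvDeriv_eq_const_mul hq (h := (qInvDeriv q)^[φ] _) (fun Z hZ => ih (m + 1) hZ) hY,
      qInvDeriv_sum hq m _ (fun u => gaussQ q (m : ℝ) u * skewGamma q (lam - 2 * (φ : ℝ) - 2) u)
        (((q ^ 2) ^ (m + 1) - 1) / (q ^ 2 - 1) * (q ^ (lam - 2 * (φ : ℝ)) - 1)) X ?_ hY,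
      betaQ_succ hq, skewGamma_succ hq,
      rpow_eq_pow_mul_rpow_sub hq (-((φ : ℝ) * ((φ : ℝ) - 1))) φ]
    · rw [show lam - 2 * ((φ + 1 : ℕ) : ℝ) = lam - 2 * (φ : ℝ) - 2 by push_cast; ring,
        show -(((φ + 1 : ℕ) : ℝ) * (((φ + 1 : ℕ) : ℝ) - 1)) =
          -((φ : ℝ) * ((φ : ℝ) - 1)) - 2 * (φ : ℝ) by push_cast; ring]
      ring
    · intro u
      rw [skewGamma_succ' hq]
      linear_combination (q ^ (lam - 2 * (φ : ℝ)) - 1) * (q ^ 2) ^ u *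
        skewGamma q (lam - 2 * (φ : ℝ) - 2) u / (q ^ 2 - 1) * gaussQ_succ_succ hq m u

theorem qInvDeriv_iterate_alternating {q : ℝ} (hq : 1 < q) (φ m : ℕ) (X : ℝ) {Y : ℝ}
    (hY : Y ≠ 0) :
    ((qInvDeriv q)^[φ] (fun Z => ∑ u ∈ Finset.range (m + φ + 1),
          (-1 : ℝ) ^ u * q ^ (u * (u - 1)) * gaussQ q ((m + φ : ℕ) : ℝ) u * Z ^ u *
            X ^ (m + φ - u))) Y =
      (-1 : ℝ) ^ φ * betaQ q ((m + φ : ℕ) : ℝ) φ *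
        ∑ u ∈ Finset.range (m + 1),
          (-1 : ℝ) ^ u * q ^ (u * (u - 1)) * gaussQ q (m : ℝ) u * Y ^ u * X ^ (m - u) := by
  induction φ generalizing m Y with
  | zero => simp [betaQ]
  | succ φ ih =>
    rw [show m + (φ + 1) = m + 1 + φ by ring, Function.iterate_succ_apply',
      qInvDeriv_eq_const_mul hq (h := (qInvDeriv q)^[φ] _) (fun Z hZ => ih (m + 1) hZ) hY,
      qInvDeriv_sum hq m _ (fun u => (-1 : ℝ) ^ u * q ^ (u * (u - 1)) * gaussQ q (m : ℝ) u)
        (-(((q ^ 2) ^ (m + 1) - 1) / (q ^ 2 - 1))) X ?_ hY,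
      betaQ_succ hq]
    · ring
    · intro u
      have hpow : q ^ ((u + 1) * (u + 1 - 1)) = (q ^ 2) ^ u * q ^ (u * (u - 1)) := by
        rw [← pow_mul, ← pow_add]
        congr 1
        cases u with
        | zero => rfl
        | succ v => simp only [Nat.add_sub_cancel]; ring
      rw [hpow]
      linear_combination -(-1 : ℝ) ^ u * (q ^ 2) ^ u * q ^ (u * (u - 1)) / (q ^ 2 - 1) *
        gaussQ_succ_succ hq m u

theorem stmt8 (q : ℝ) (hq : 1 < q) (lam : ℝ) (φ k : ℕ) (hφ : φ ≤ k) (X Y : ℝ) (hY : Y ≠ 0) :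
    ((qInvDeriv q)^[φ] (fun Z => ∑ u ∈ Finset.range (k + 1),
          gaussQ q (k : ℝ) u * skewGamma q lam u * Z ^ u * X ^ (k - u))) Y
        = q ^ (-((φ : ℝ) * ((φ : ℝ) - 1))) * betaQ q (k : ℝ) φ * skewGamma q lam φ *
            ∑ u ∈ Finset.range ((k - φ) + 1),
              gaussQ q ((k - φ : ℕ) : ℝ) u * skewGamma q (lam - 2 * (φ : ℝ)) u * Y ^ u *
                X ^ ((k - φ) - u)
    ∧ ((qInvDeriv q)^[φ] (fun Z => ∑ u ∈ Finset.range (k + 1),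
          (-1 : ℝ) ^ u * q ^ (u * (u - 1)) * gaussQ q (k : ℝ) u * Z ^ u * X ^ (k - u))) Y
        = (-1 : ℝ) ^ φ * betaQ q (k : ℝ) φ *
            ∑ u ∈ Finset.range ((k - φ) + 1),
              (-1 : ℝ) ^ u * q ^ (u * (u - 1)) * gaussQ q ((k - φ : ℕ) : ℝ) u * Y ^ u *
                X ^ ((k - φ) - u) := by
  obtain ⟨m, rfl⟩ := Nat.exists_eq_add_of_le' hφ
  rw [Nat.add_sub_cancel]
  exact ⟨qInvDeriv_iterate_skewGamma hq lam φ m X hY, qInvDeriv_iterate_alternating hq φ m X hY⟩
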